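/- Fix 1 < p < ∞, κ ∈ ℝ, and D > 0. Let μ_p(κ,D) denote the infimum of (∫_{-D/2}^{D/2} |φ′(s)|^p e^{-κ s²/2} ds)/(∫_{-D/2}^{D/2} |φ(s)|^p e^{-κ s²/2} ds) over all Lipschitz functions φ : [-D/2, D/2] → ℝ that are not identically zero and satisfy ∫_{-D/2}^{D/2} |φ(s)|^{p-2} φ(s) e^{-κ s²/2} ds = 0, where φ′ is the almost-everywhere derivative. Then there exists an odd C¹ function φ : [-D/2, D/2] → ℝ, not identically zero, such that: (i) the map t ↦ e^{-κ t²/2} |φ′(t)|^{p-2} φ′(t) is differentiable on (-D/2, D/2) with derivative equal to -μ_p(κ,D) e^{-κ t²/2} |φ(t)|^{p-2} φ(t); (ii) φ(0) = 0, φ(t) > 0 for t ∈ (0, D/2], φ′(t) > 0 for t ∈ (0, D/2), and φ′(D/2) = 0; (iii) φ is admissible for the infimum defining μ_p(κ,D) and realizes it (its Rayleigh quotient equals μ_p(κ,D)). -/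

import Mathlib

/-- The odd power function `sgnPow q x = sign x * |x| ^ q` (with value `0` at `0`);
for `q = p - 1` this is the function usually written `|x|^{p-2} x`. -/
noncomputable def sgnPow (q x : ℝ) : ℝ := Real.sign x * |x| ^ q

/-- The first nonzero Neumann eigenvalue `μ_p(κ, D)` of the one-dimensional weighted
`p`-Laplacian on `[-D/2, D/2]`, defined variationally. -/
noncomputable def rayleighNeumann (p κ D : ℝ) : ℝ :=
  sInf { r : ℝ | ∃ φ : ℝ → ℝ,
    (∃ K : NNReal, LipschitzOnWith K φ (Set.Icc (-(D / 2)) (D / 2))) ∧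
    ¬ (∀ s ∈ Set.Icc (-(D / 2)) (D / 2), φ s = 0) ∧
    (∫ s in (-(D / 2))..(D / 2), sgnPow (p - 1) (φ s) * Real.exp (-κ * s ^ 2 / 2)) = 0 ∧
    r = (∫ s in (-(D / 2))..(D / 2), |deriv φ s| ^ p * Real.exp (-κ * s ^ 2 / 2)) /
        (∫ s in (-(D / 2))..(D / 2), |φ s| ^ p * Real.exp (-κ * s ^ 2 / 2)) }

/-! Integrating the equation from `t` to the endpoint `L`, where the flux `w |φ'|^{p-2} φ'`
vanishes, turns the problem with weight `w` on `[0, L]` into the fixed-point equation `T φ = c φ` of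
a compact, monotone, homogeneous operator `T`, the nonlinear inverse of the Neumann problem. A
Krein–Rutman argument gives a positive solution, whose odd extension solves the equation on
`[-L, L]` for some `ν > 0`.

That `ν` is the infimum follows by testing the equation with `|h|^p φ^{1-p}`: Picone's inequality
gives `ν ∫ |h|^p w ≤ ∫ |h'|^p w` on each half of the interval as soon as `h 0 = 0`. This applies to
`h = f - f 0` for every `f` of weighted `p`-mean zero, and among the translates `f - c` of such an
`f` it is `f` itself that minimizes `∫ |f - c|^p w`.
-/

open Set Filter Topology MeasureTheory

section SgnPow

variable {p q : ℝ}

theorem sgnPow_of_nonneg (hq : 0 < q) {x : ℝ} (hx : 0 ≤ x) : sgnPow q x = x ^ q := by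
  rcases hx.eq_or_lt with rfl | h
  · simp [sgnPow, Real.zero_rpow hq.ne']
  · rw [sgnPow, Real.sign_of_pos h, one_mul, abs_of_pos h]

theorem sgnPow_zero : sgnPow q 0 = 0 := by
  simp [sgnPow]

theorem sgnPow_neg (x : ℝ) : sgnPow q (-x) = -sgnPow q x := by
  simp [sgnPow, Real.sign_neg]

theorem coe_sign_eq_real_sign (x : ℝ) : (SignType.sign x : ℝ) = Real.sign x := by
  rcases lt_trichotomy x 0 with h | rfl | h
  · simp [sign_neg h, Real.sign_of_neg h]
  · simp
  · simp [sign_pos h, Real.sign_of_pos h]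

theorem sgnPow_mul (x y : ℝ) : sgnPow q (x * y) = sgnPow q x * sgnPow q y := by
  simp only [sgnPow, ← coe_sign_eq_real_sign, sign_mul, abs_mul, SignType.coe_mul,
    Real.mul_rpow (abs_nonneg x) (abs_nonneg y), mul_mul_mul_comm]

theorem strictMono_sgnPow (hq : 0 < q) : StrictMono (sgnPow q) :=
  strictMono_of_odd_strictMonoOn_nonneg sgnPow_neg fun x hx y hy hxy => by
    rw [sgnPow_of_nonneg hq hx, sgnPow_of_nonneg hq hy]
    exact Real.rpow_lt_rpow hx hxy hq

theorem sgnPow_pos_iff (hq : 0 < q) {x : ℝ} : 0 < sgnPow q x ↔ 0 < x := by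
  simpa [sgnPow_zero] using (strictMono_sgnPow hq).lt_iff_lt (a := 0) (b := x)

theorem sgnPow_sgnPow_inv (hq : 0 < q) (x : ℝ) : sgnPow q (sgnPow q⁻¹ x) = x := by
  have key : ∀ y : ℝ, 0 ≤ y → sgnPow q (sgnPow q⁻¹ y) = y := fun y hy => by
    rw [sgnPow_of_nonneg (inv_pos.2 hq) hy, sgnPow_of_nonneg hq (Real.rpow_nonneg hy _),
      Real.rpow_inv_rpow hy hq.ne']
  rcases le_total 0 x with h | h
  · exact key x h
  · simpa [sgnPow_neg] using key (-x) (neg_nonneg.2 h)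

theorem continuous_sgnPow (hq : 0 < q) : Continuous (sgnPow q) :=
  (strictMono_sgnPow hq).monotone.continuous_of_surjective fun x => ⟨_, sgnPow_sgnPow_inv hq x⟩

theorem sgnPow_mul_self (hp : 1 < p) (x : ℝ) : sgnPow (p - 1) x * x = |x| ^ p := by
  rcases eq_or_ne x 0 with rfl | _
  · simp [Real.zero_rpow (by linarith : p ≠ 0)]
  · rw [sgnPow, ← coe_sign_eq_real_sign, mul_right_comm, sign_mul_self, ← Real.rpow_one_add'
      (abs_nonneg x) (by linarith), add_sub_cancel]

theorem hasDerivAt_abs_rpow_sgnPow (hp : 1 < p) (x : ℝ) :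
    HasDerivAt (fun y => |y| ^ p) (p * sgnPow (p - 1) x) x := by
  refine (hasDerivAt_abs_rpow x hp).congr_deriv ?_
  rcases eq_or_ne x 0 with rfl | hx
  · simp [sgnPow_zero]
  · rw [mul_assoc, sgnPow, show p - 1 = p - 2 + 1 by ring, Real.rpow_add_one (abs_ne_zero.2 hx)]
    rw [← coe_sign_eq_real_sign, mul_left_comm (SignType.sign x : ℝ), sign_mul_abs]

theorem convexOn_abs_rpow (hp : 1 < p) : ConvexOn ℝ univ fun x : ℝ => |x| ^ p := by
  refine Monotone.convexOn_univ_of_deriv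
    (fun x => (hasDerivAt_abs_rpow_sgnPow hp x).differentiableAt) fun x y hxy => ?_
  rw [(hasDerivAt_abs_rpow_sgnPow hp x).deriv, (hasDerivAt_abs_rpow_sgnPow hp y).deriv]
  exact mul_le_mul_of_nonneg_left ((strictMono_sgnPow (sub_pos.2 hp)).monotone hxy) (by linarith)

theorem abs_rpow_add_mul_sub_le (hp : 1 < p) (x y : ℝ) :
    |x| ^ p + p * sgnPow (p - 1) x * (y - x) ≤ |y| ^ p := by
  have hd := hasDerivAt_abs_rpow_sgnPow hp x
  rcases lt_trichotomy x y with h | rfl | h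
  · have := (convexOn_abs_rpow hp).le_slope_of_hasDerivAt (mem_univ x) (mem_univ y) h hd
    rw [slope_def_field, le_div_iff₀ (sub_pos.2 h)] at this
    linarith
  · simp
  · have := (convexOn_abs_rpow hp).slope_le_of_hasDerivAt (mem_univ y) (mem_univ x) h hd
    rw [slope_def_field, div_le_iff₀ (sub_pos.2 h)] at this
    linarith

end SgnPow

section OddFunctions

theorem integral_neg_left_of_odd {f : ℝ → ℝ} (hf : Continuous f) (hodd : Function.Odd f)
    (a b : ℝ) : ∫ x in -a..b, f x = ∫ x in a..b, f x := by
  have hsymm : ∫ x in -a..a, f x = 0 := by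
    have h := intervalIntegral.integral_comp_neg (a := -a) (b := a) f
    simp only [hodd.eq, intervalIntegral.integral_neg, neg_neg] at h
    linarith
  rw [← intervalIntegral.integral_add_adjacent_intervals (hf.intervalIntegrable (-a) a)
    (hf.intervalIntegrable a b), hsymm, zero_add]

theorem integral_eq_integral_comp_neg_add {f : ℝ → ℝ}
    (hf : ∀ a b, IntervalIntegrable f volume a b) (a : ℝ) :
    ∫ x in -a..a, f x = (∫ x in (0 : ℝ)..a, f (-x)) + ∫ x in (0 : ℝ)..a, f x := by
  rw [← intervalIntegral.integral_add_adjacent_intervals (hf (-a) 0) (hf 0 a),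
    intervalIntegral.integral_comp_neg, neg_zero]

theorem exists_continuous_odd_eqOn_Ici {f : ℝ → ℝ} (hf : Continuous f) (hf0 : f 0 = 0) :
    ∃ g : ℝ → ℝ, Continuous g ∧ Function.Odd g ∧ EqOn g f (Ici 0) := by
  refine ⟨fun x => f (max x 0) - f (max (-x) 0), by fun_prop, fun x => ?_, fun x hx => ?_⟩
  · simp
  · have hx0 : 0 ≤ x := hx
    simp only [max_eq_left hx0, max_eq_right (neg_nonpos.2 hx0), hf0, sub_zero]

end OddFunctions

section AbsoluteContinuity

theorem absolutelyContinuousOnInterval_of_locallyLipschitz {f : ℝ → ℝ} (hf : LocallyLipschitz f)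
    (a b : ℝ) : AbsolutelyContinuousOnInterval f a b := by
  obtain ⟨K, hK⟩ := hf.locallyLipschitzOn.exists_lipschitzOnWith_of_compact isCompact_uIcc
  exact hK.absolutelyContinuousOnInterval

theorem locallyLipschitz_abs_rpow {p : ℝ} (hp : 1 < p) {h : ℝ → ℝ} (hh : LocallyLipschitz h) :
    LocallyLipschitz fun x => |h x| ^ p :=
  (contDiff_norm_rpow (E := ℝ) hp).locallyLipschitz.comp hh

theorem continuous_abs_rpow_mul {p : ℝ} (hp : 0 ≤ p) {u w : ℝ → ℝ} (hu : Continuous u)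
    (hw : Continuous w) : Continuous fun x => |u x| ^ p * w x :=
  (hu.abs.rpow_const fun _ => .inr hp).mul hw

theorem intervalIntegrable_abs_deriv_rpow_mul {p : ℝ} (hp : 0 ≤ p) {w h : ℝ → ℝ}
    (hw : Continuous w) {K : NNReal} (hh : LipschitzWith K h) (a b : ℝ) :
    IntervalIntegrable (fun t => |deriv h t| ^ p * w t) volume a b := by
  have := measurable_deriv h
  have := hw.measurable
  refine (hw.const_mul ((K : ℝ) ^ p)).intervalIntegrable a b |>.mono_fun (by fun_prop)
    (ae_of_all _ fun t => ?_)
  simp only [norm_mul, Real.norm_of_nonneg (Real.rpow_nonneg (abs_nonneg (deriv h t)) p),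
    Real.norm_of_nonneg (Real.rpow_nonneg K.coe_nonneg p)]
  gcongr
  exact norm_deriv_le_of_lipschitz hh

end AbsoluteContinuity

theorem exists_pos_mul_le_of_hasDerivAt_zero {F : ℝ → ℝ} {F' L : ℝ} (hF : Continuous F)
    (hF0 : F 0 = 0) (hd : HasDerivAt F F' 0) (hF' : 0 < F') (hpos : ∀ t ∈ Ioc 0 L, 0 < F t) :
    ∃ ε > 0, ∀ t ∈ Icc 0 L, ε * t ≤ F t := by
  have hcont : ContinuousOn (dslope F 0) (Icc 0 L) :=
    (continuousOn_dslope univ_mem).2 ⟨hF.continuousOn, hd.differentiableAt⟩ |>.mono (subset_univ _)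
  have hdpos : ∀ t ∈ Icc 0 L, 0 < dslope F 0 t := by
    intro t ht
    rcases ht.1.eq_or_lt with rfl | h
    · rwa [dslope_same, hd.deriv]
    · rw [dslope_of_ne _ h.ne', slope_def_field, hF0, sub_zero, sub_zero]
      exact div_pos (hpos t ⟨h, ht.2⟩) h
  obtain ⟨ε, hε, hle⟩ := isCompact_Icc.exists_forall_le' hcont hdpos
  refine ⟨ε, hε, fun t ht => ?_⟩
  calc ε * t ≤ dslope F 0 t * t := mul_le_mul_of_nonneg_right (hle t ht) ht.1
    _ = F t := by simpa [hF0, mul_comm] using sub_smul_dslope F 0 t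

section ContinuousFunctions

instance instOrderClosedTopologyContinuousMap {X : Type*} [TopologicalSpace X] :
    OrderClosedTopology C(X, ℝ) where
  isClosed_le' := by
    simp only [ContinuousMap.le_def, ofPred_forall]
    exact isClosed_iInter fun x => isClosed_le (by fun_prop) (by fun_prop)

theorem norm_le_norm_of_nonneg_of_le {X : Type*} [TopologicalSpace X] [CompactSpace X]
    {f g : C(X, ℝ)} (hf : 0 ≤ f) (hfg : f ≤ g) : ‖f‖ ≤ ‖g‖ :=
  (ContinuousMap.norm_le _ (norm_nonneg g)).2 fun x =>
    (abs_le_abs_of_nonneg (ContinuousMap.le_def.1 hf x) (ContinuousMap.le_def.1 hfg x)).trans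
      (g.norm_coe_le_norm x)

theorem isCompact_setOf_lipschitzWith_abs_le (X : Type*) [PseudoMetricSpace X] (K : NNReal)
    (C : ℝ) :
    IsCompact {f : C(X, ℝ) | LipschitzWith K f ∧ ∀ x, |f x| ≤ C} := by
  refine ArzelaAscoli.isCompact_of_equicontinuous _ ?_ ?_
  · have himage : ContinuousMap.toFun '' {f : C(X, ℝ) | LipschitzWith K f ∧ ∀ x, |f x| ≤ C} =
        (univ.pi fun _ => Icc (-C) C) ∩ {f : X → ℝ | LipschitzWith K f} := by
      ext f
      constructor
      · rintro ⟨f, ⟨hK, hC⟩, rfl⟩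
        exact ⟨fun x _ => abs_le.1 (hC x), hK⟩
      · rintro ⟨hC, hK⟩
        exact ⟨⟨f, hK.continuous⟩, ⟨hK, fun x => abs_le.2 (hC x (mem_univ x))⟩, rfl⟩
    rw [himage]
    exact (isCompact_univ_pi fun _ => isCompact_Icc).inter_right
      (isClosed_setOfPred_lipschitzWith K)
  · exact (LipschitzWith.uniformEquicontinuous _ K fun f => f.2.1).equicontinuous

end ContinuousFunctions

section MeanZero

variable {w f : ℝ → ℝ} {p a b : ℝ}

theorem integral_abs_rpow_mul_pos (hp : 0 < p) (hw : ContinuousOn w (Icc a b))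
    (hw0 : ∀ x ∈ Icc a b, 0 < w x) (hab : a < b) (hf : ContinuousOn f (Icc a b))
    (hne : ¬ ∀ s ∈ Icc a b, f s = 0) : 0 < ∫ s in a..b, |f s| ^ p * w s := by
  push Not at hne
  obtain ⟨s, hs, hfs⟩ := hne
  refine intervalIntegral.integral_pos hab
    ((hf.abs.rpow_const fun _ _ => .inr hp.le).mul hw)
    (fun x hx => mul_nonneg (by positivity) (hw0 x (Ioc_subset_Icc_self hx)).le) ⟨s, hs, ?_⟩
  exact mul_pos (Real.rpow_pos_of_pos (abs_pos.2 hfs) p) (hw0 s hs)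

/-- This is the first-order condition at `c = 0` for the convex function `c ↦ ∫ |f - c|^p w`. -/
theorem integral_abs_rpow_mul_le_integral_sub_const (hp : 1 < p) (hab : a ≤ b)
    (hw : Continuous w) (hw0 : ∀ x, 0 ≤ w x) (hf : Continuous f)
    (hmean : ∫ s in a..b, sgnPow (p - 1) (f s) * w s = 0) (c : ℝ) :
    ∫ s in a..b, |f s| ^ p * w s ≤ ∫ s in a..b, |f s - c| ^ p * w s := by
  have hp0 : 0 ≤ p := by linarith
  have hpow := continuous_abs_rpow_mul hp0 hf hw
  have hsgn : Continuous fun s => p * c * (sgnPow (p - 1) (f s) * w s) :=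
    (((continuous_sgnPow (sub_pos.2 hp)).comp hf).mul hw).const_mul (p * c)
  calc ∫ s in a..b, |f s| ^ p * w s
      = ∫ s in a..b, (|f s| ^ p * w s - p * c * (sgnPow (p - 1) (f s) * w s)) := by
        rw [intervalIntegral.integral_sub (hpow.intervalIntegrable a b)
          (hsgn.intervalIntegrable a b), intervalIntegral.integral_const_mul, hmean, mul_zero,
          sub_zero]
    _ ≤ ∫ s in a..b, |f s - c| ^ p * w s := by
        refine intervalIntegral.integral_mono_on hab
          ((hpow.sub hsgn).intervalIntegrable a b)
          ((continuous_abs_rpow_mul hp0 (hf.sub continuous_const) hw).intervalIntegrable a b)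
          fun s _ => ?_
        have := mul_le_mul_of_nonneg_right (abs_rpow_add_mul_sub_le hp (f s) (f s - c)) (hw0 s)
        linarith

theorem integral_abs_deriv_rpow_mul_congr {f g : ℝ → ℝ} (hab : a ≤ b) (hfg : EqOn f g (Icc a b)) :
    ∫ s in a..b, |deriv f s| ^ p * w s = ∫ s in a..b, |deriv g s| ^ p * w s := by
  rw [intervalIntegral.integral_of_le hab, intervalIntegral.integral_of_le hab,
    integral_Ioc_eq_integral_Ioo, integral_Ioc_eq_integral_Ioo]
  refine setIntegral_congr_fun measurableSet_Ioo fun s hs => ?_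
  simp only [(hfg.eventuallyEq_of_mem (Icc_mem_nhds hs.1 hs.2)).deriv_eq]

end MeanZero

section KreinRutman

variable {E : Type*} [NormedAddCommGroup E] [NormedSpace ℝ E] [PartialOrder E]

/-- The Collatz–Wielandt numbers of a map `T` of an ordered normed space: the `c ≥ 0` for which
`T` has a normalized nonnegative subeigenvector. The supremum of this set plays the role of the
spectral radius. -/
def collatzWielandtSet (T : E → E) : Set ℝ :=
  {c | 0 ≤ c ∧ ∃ f, 0 ≤ f ∧ ‖f‖ = 1 ∧ c • f ≤ T f}

variable [PosSMulMono ℝ E] {T : E → E} {e : E}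

theorem mem_collatzWielandtSet_of_smul_le
    (hsmul : ∀ ⦃c : ℝ⦄ ⦃f : E⦄, 0 ≤ c → 0 ≤ f → T (c • f) = c • T f)
    {c : ℝ} {f : E} (hc : 0 ≤ c) (hf : 0 < f) (hcf : c • f ≤ T f) :
    c ∈ collatzWielandtSet T := by
  have hr : 0 ≤ ‖f‖⁻¹ := inv_nonneg.2 (norm_nonneg f)
  refine ⟨hc, ‖f‖⁻¹ • f, smul_nonneg hr hf.le, norm_smul_inv_norm hf.ne', ?_⟩
  rw [hsmul hr hf.le, smul_comm]
  exact smul_le_smul_of_nonneg_left hcf hr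

theorem bddAbove_collatzWielandtSet
    (hnorm : ∀ ⦃f g : E⦄, 0 ≤ f → f ≤ g → ‖f‖ ≤ ‖g‖) {K : Set E} (hK : IsCompact K)
    (hTK : ∀ f, 0 ≤ f → ‖f‖ = 1 → T f ∈ K) : BddAbove (collatzWielandtSet T) := by
  obtain ⟨C, hC⟩ := hK.isBounded.exists_norm_le
  refine ⟨C, ?_⟩
  rintro c ⟨hc, f, hf, hf1, hcf⟩
  calc c = ‖c • f‖ := by rw [norm_smul, hf1, mul_one, Real.norm_of_nonneg hc]
    _ ≤ ‖T f‖ := hnorm (smul_nonneg hc hf) hcf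
    _ ≤ C := hC _ (hTK f hf hf1)

variable [IsOrderedAddMonoid E]

/-- Applying `T` to a strict subeigenvector `g` makes the strict inequality uniform with respect
to `e`, so that the constant can be increased. -/
theorem exists_gt_mem_collatzWielandtSet
    (hsmul : ∀ ⦃c : ℝ⦄ ⦃f : E⦄, 0 ≤ c → 0 ≤ f → T (c • f) = c • T f)
    (he : 0 < e) (hupper : ∀ f, 0 ≤ f → ∃ C : ℝ, T f ≤ C • e)
    (hlower : ∀ ⦃f g⦄, 0 ≤ f → f < g → ∃ ε : ℝ, 0 < ε ∧ ε • e + T f ≤ T g)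
    {c : ℝ} {g : E} (hc : 0 ≤ c) (hg : 0 ≤ g) (hcg : c • g < T g) :
    ∃ c' > c, c' ∈ collatzWielandtSet T := by
  have hcg0 : 0 ≤ c • g := smul_nonneg hc hg
  obtain ⟨ε, hε, hTT⟩ := hlower hcg0 hcg
  obtain ⟨C, hC⟩ := hupper g hg
  have hC' : T g ≤ max C 1 • e :=
    hC.trans (by
      rw [← sub_nonneg, ← sub_smul]
      exact smul_nonneg (sub_nonneg.2 (le_max_left C 1)) he.le)
  have hM : 0 < max C 1 := lt_max_of_lt_right one_pos
  have hδ : 0 < ε / max C 1 := div_pos hε hM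
  refine ⟨c + ε / max C 1, lt_add_of_pos_right c hδ,
    mem_collatzWielandtSet_of_smul_le hsmul (by positivity) (hcg0.trans_lt hcg) ?_⟩
  calc (c + ε / max C 1) • T g = (ε / max C 1) • T g + c • T g := by rw [add_smul, add_comm]
    _ ≤ (ε / max C 1) • max C 1 • e + c • T g := by gcongr
    _ = ε • e + T (c • g) := by rw [smul_smul, div_mul_cancel₀ _ hM.ne', hsmul hc hg]
    _ ≤ T (T g) := hTT

theorem map_le_map_of_exists_smul_add_le (he : 0 ≤ e)
    (hlower : ∀ ⦃f g⦄, 0 ≤ f → f < g → ∃ ε : ℝ, 0 < ε ∧ ε • e + T f ≤ T g)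
    {f g : E} (hf : 0 ≤ f) (hfg : f ≤ g) : T f ≤ T g := by
  rcases hfg.eq_or_lt with rfl | hlt
  · exact le_rfl
  · obtain ⟨ε, hε, hle⟩ := hlower hf hlt
    exact (le_add_of_nonneg_left (smul_nonneg hε.le he)).trans hle

/-- **Krein–Rutman theorem** for a nonlinear `e`-positive map: `T f` converges to an eigenvector
along subeigenvectors `f` whose constants approach the supremum. -/
theorem exists_pos_eigenvector_of_compact [OrderClosedTopology E]
    (hnorm : ∀ ⦃f g : E⦄, 0 ≤ f → f ≤ g → ‖f‖ ≤ ‖g‖)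
    (hcont : ContinuousOn T (Ici 0))
    (hsmul : ∀ ⦃c : ℝ⦄ ⦃f : E⦄, 0 ≤ c → 0 ≤ f → T (c • f) = c • T f)
    {K : Set E} (hK : IsCompact K) (hTK : ∀ f, 0 ≤ f → ‖f‖ = 1 → T f ∈ K)
    (he : 0 < e) (hupper : ∀ f, 0 ≤ f → ∃ C : ℝ, T f ≤ C • e)
    (hlower : ∀ ⦃f g⦄, 0 ≤ f → f < g → ∃ ε : ℝ, 0 < ε ∧ ε • e + T f ≤ T g) :
    ∃ c : ℝ, 0 < c ∧ ∃ g, 0 < g ∧ T g = c • g := by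
  have hbdd := bddAbove_collatzWielandtSet hnorm hK hTK
  have hT0 : T 0 = 0 := by simpa using hsmul le_rfl (le_refl (0 : E))
  obtain ⟨ε, hε, hεe⟩ := hlower le_rfl he
  have hεS : ε ∈ collatzWielandtSet T :=
    mem_collatzWielandtSet_of_smul_le hsmul hε.le he (by simpa [hT0] using hεe)
  have hc : 0 < sSup (collatzWielandtSet T) := hε.trans_le (le_csSup hbdd hεS)
  obtain ⟨a, -, ha, haS⟩ := exists_seq_tendsto_sSup ⟨ε, hεS⟩ hbdd
  choose ha0 f hf hf1 haf using haS
  have hTf0 : ∀ n, 0 ≤ T (f n) := fun n => (smul_nonneg (ha0 n) (hf n)).trans (haf n)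
  obtain ⟨g, -, φ, hφ, hTg⟩ := hK.tendsto_subseq fun n => hTK (f n) (hf n) (hf1 n)
  have haφ := ha.comp hφ.tendsto_atTop
  have hg0 : 0 ≤ g := ge_of_tendsto' hTg fun n => hTf0 (φ n)
  have hg : 0 < g := by
    refine hg0.lt_of_ne' (norm_pos_iff.1 (hc.trans_le (le_of_tendsto_of_tendsto' haφ hTg.norm ?_)))
    intro n
    simpa [norm_smul, hf1, abs_of_nonneg (ha0 (φ n))] using
      hnorm (smul_nonneg (ha0 (φ n)) (hf (φ n))) (haf (φ n))
  have hle : sSup (collatzWielandtSet T) • g ≤ T g := by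
    have hTTg : Tendsto (fun n => T (T (f (φ n)))) atTop (𝓝 (T g)) :=
      (hcont g hg0).tendsto.comp (tendsto_nhdsWithin_iff.2 ⟨hTg, .of_forall fun n => hTf0 (φ n)⟩)
    refine le_of_tendsto_of_tendsto' (haφ.smul hTg) hTTg fun n => ?_
    simp only [Function.comp_apply]
    rw [← hsmul (ha0 _) (hf _)]
    exact map_le_map_of_exists_smul_add_le he.le hlower (smul_nonneg (ha0 _) (hf _)) (haf _)
  refine ⟨_, hc, g, hg, (hle.eq_of_not_lt fun hlt => ?_).symm⟩
  obtain ⟨c', hc', hc'S⟩ := exists_gt_mem_collatzWielandtSet hsmul he hupper hlower hc.le hg0 hlt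
  exact hc'.not_ge (le_csSup hbdd hc'S)

end KreinRutman

section NeumannInverse

/-- The derivative `u'` of the solution of the Neumann problem
`(w |u'|^{q-1} u')' = -w |f|^{q-1} f`, `u' L = 0`. -/
noncomputable def neumannSlope (w : ℝ → ℝ) (q L : ℝ) (f : ℝ → ℝ) (s : ℝ) : ℝ :=
  sgnPow q⁻¹ ((w s)⁻¹ * ∫ x in s..L, w x * sgnPow q (f x))

/-- The solution `u` of `(w |u'|^{q-1} u')' = -w |f|^{q-1} f`, `u 0 = 0`, `u' L = 0`, as a
nonlinear operator applied to `f`. -/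
noncomputable def neumannInverse (w : ℝ → ℝ) (q L : ℝ) (f : ℝ → ℝ) (t : ℝ) : ℝ :=
  ∫ s in (0 : ℝ)..t, neumannSlope w q L f s

variable {w f g : ℝ → ℝ} {q L s : ℝ}

theorem neumannInverse_zero : neumannInverse w q L f 0 = 0 :=
  intervalIntegral.integral_same

theorem neumannSlope_const_mul (hq : 0 < q) (c : ℝ) :
    neumannSlope w q L (fun x => c * f x) s = c * neumannSlope w q L f s := by
  have h : (w s)⁻¹ * ∫ x in s..L, w x * sgnPow q (c * f x) =
      sgnPow q c * ((w s)⁻¹ * ∫ x in s..L, w x * sgnPow q (f x)) := by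
    rw [mul_left_comm, ← intervalIntegral.integral_const_mul (sgnPow q c)]
    simp only [sgnPow_mul, mul_left_comm]
  have hc : sgnPow q⁻¹ (sgnPow q c) = c := by
    simpa using sgnPow_sgnPow_inv (inv_pos.2 hq) c
  rw [neumannSlope, neumannSlope, h, sgnPow_mul, hc]

theorem neumannInverse_const_mul (hq : 0 < q) (c t : ℝ) :
    neumannInverse w q L (fun x => c * f x) t = c * neumannInverse w q L f t := by
  simp only [neumannInverse, neumannSlope_const_mul hq, intervalIntegral.integral_const_mul]

theorem neumannSlope_mono (hw : Continuous w) (hw0 : ∀ x, 0 < w x) (hq : 0 < q)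
    (hf : Continuous f) (hg : Continuous g) (hs : s ≤ L) (hfg : ∀ x ∈ Icc s L, f x ≤ g x) :
    neumannSlope w q L f s ≤ neumannSlope w q L g s := by
  have hsgn := continuous_sgnPow hq
  refine (strictMono_sgnPow (inv_pos.2 hq)).monotone
    (mul_le_mul_of_nonneg_left ?_ (inv_pos.2 (hw0 s)).le)
  refine intervalIntegral.integral_mono_on hs (Continuous.intervalIntegrable (by fun_prop) _ _)
    (Continuous.intervalIntegrable (by fun_prop) _ _) fun x hx => ?_
  exact mul_le_mul_of_nonneg_left ((strictMono_sgnPow hq).monotone (hfg x hx)) (hw0 x).le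

theorem continuous_neumannSlope_comp {X : Type*} [TopologicalSpace X] (hw : Continuous w)
    (hw0 : ∀ x, 0 < w x) (hq : 0 < q) {F : X → ℝ → ℝ} (hF : Continuous (Function.uncurry F))
    {σ : X → ℝ} (hσ : Continuous σ) : Continuous fun x => neumannSlope w q L (F x) (σ x) := by
  have hint : Continuous fun x => ∫ y in σ x..L, w y * sgnPow q (F x y) := by
    simp only [intervalIntegral.integral_symm L]
    refine (intervalIntegral.continuous_parametric_intervalIntegral_of_continuous ?_ hσ).neg
    exact (hw.comp continuous_snd).mul ((continuous_sgnPow hq).comp hF)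
  exact (continuous_sgnPow (inv_pos.2 hq)).comp
    (((hw.comp hσ).inv₀ fun x => (hw0 (σ x)).ne').mul hint)

theorem continuous_neumannInverse_comp {X : Type*} [TopologicalSpace X] (hw : Continuous w)
    (hw0 : ∀ x, 0 < w x) (hq : 0 < q) {F : X → ℝ → ℝ} (hF : Continuous (Function.uncurry F))
    {σ : X → ℝ} (hσ : Continuous σ) : Continuous fun x => neumannInverse w q L (F x) (σ x) := by
  refine intervalIntegral.continuous_parametric_intervalIntegral_of_continuous ?_ hσ
  exact continuous_neumannSlope_comp hw hw0 hq (F := fun z : X × ℝ => F z.1)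
    (hF.comp (by fun_prop : Continuous fun z : (X × ℝ) × ℝ => (z.1.1, z.2))) continuous_snd

theorem continuous_neumannSlope (hw : Continuous w) (hw0 : ∀ x, 0 < w x) (hq : 0 < q)
    (hf : Continuous f) : Continuous (neumannSlope w q L f) :=
  continuous_neumannSlope_comp hw hw0 hq (F := fun _ => f) (hf.comp continuous_snd) continuous_id

theorem continuous_neumannInverse (hw : Continuous w) (hw0 : ∀ x, 0 < w x) (hq : 0 < q)
    (hf : Continuous f) : Continuous (neumannInverse w q L f) :=
  continuous_neumannInverse_comp hw hw0 hq (F := fun _ => f) (hf.comp continuous_snd) continuous_id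

theorem neumannSlope_lt (hw : Continuous w) (hw0 : ∀ x, 0 < w x) (hq : 0 < q)
    (hf : Continuous f) (hg : Continuous g) (hs : s < L) (hfg : ∀ x ∈ Icc s L, f x ≤ g x)
    (hlt : ∃ x ∈ Icc s L, f x < g x) : neumannSlope w q L f s < neumannSlope w q L g s := by
  have hsgn := continuous_sgnPow hq
  have hmono := strictMono_sgnPow hq
  obtain ⟨t, ht, hft⟩ := hlt
  refine strictMono_sgnPow (inv_pos.2 hq) (mul_lt_mul_of_pos_left ?_ (inv_pos.2 (hw0 s)))
  refine intervalIntegral.integral_lt_integral_of_continuousOn_of_le_of_exists_lt hs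
    (by fun_prop) (by fun_prop) (fun x hx => ?_) ⟨t, ht, ?_⟩
  · exact mul_le_mul_of_nonneg_left (hmono.monotone (hfg x (Ioc_subset_Icc_self hx))) (hw0 x).le
  · exact mul_lt_mul_of_pos_left (hmono hft) (hw0 t)

theorem exists_pos_mul_le_neumannInverse_sub (hL : 0 < L) (hw : Continuous w)
    (hw0 : ∀ x, 0 < w x) (hq : 0 < q) (hf : Continuous f) (hg : Continuous g)
    (hfg : ∀ x ∈ Icc 0 L, f x ≤ g x) (hlt : ∃ x ∈ Icc 0 L, f x < g x) :
    ∃ ε > 0, ∀ t ∈ Icc 0 L, ε * t ≤ neumannInverse w q L g t - neumannInverse w q L f t := by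
  have hcf := continuous_neumannSlope (L := L) hw hw0 hq hf
  have hcg := continuous_neumannSlope (L := L) hw hw0 hq hg
  have hle : ∀ s ∈ Icc 0 L, neumannSlope w q L f s ≤ neumannSlope w q L g s := fun s hs =>
    neumannSlope_mono hw hw0 hq hf hg hs.2 fun x hx => hfg x ⟨hs.1.trans hx.1, hx.2⟩
  have hlt0 : neumannSlope w q L f 0 < neumannSlope w q L g 0 :=
    neumannSlope_lt hw hw0 hq hf hg hL hfg hlt
  refine exists_pos_mul_le_of_hasDerivAt_zero
    (F := fun t => neumannInverse w q L g t - neumannInverse w q L f t)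
    ((continuous_neumannInverse hw hw0 hq hg).sub (continuous_neumannInverse hw hw0 hq hf))
    (by simp [neumannInverse])
    ((hcg.integral_hasStrictDerivAt 0 0).sub (hcf.integral_hasStrictDerivAt 0 0)).hasDerivAt
    (sub_pos.2 hlt0) fun t ht => ?_
  exact sub_pos.2 <| intervalIntegral.integral_lt_integral_of_continuousOn_of_le_of_exists_lt ht.1
    hcf.continuousOn hcg.continuousOn (fun s hs => hle s ⟨hs.1.le, hs.2.trans ht.2⟩)
    ⟨0, left_mem_Icc.2 ht.1.le, hlt0⟩

theorem abs_neumannSlope_le (hw : Continuous w) (hw0 : ∀ x, 0 < w x) (hq : 0 < q)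
    (hf : Continuous f) (hg : Continuous g) (hs : s ≤ L) (hfg : ∀ x ∈ Icc s L, |f x| ≤ g x) :
    |neumannSlope w q L f s| ≤ neumannSlope w q L g s := by
  refine abs_le.2 ⟨?_, neumannSlope_mono hw hw0 hq hf hg hs fun x hx => (abs_le.1 (hfg x hx)).2⟩
  rw [← neg_one_mul, ← neumannSlope_const_mul hq]
  refine neumannSlope_mono hw hw0 hq (continuous_const.mul hg) hf hs fun x hx => ?_
  rw [neg_one_mul]
  exact (abs_le.1 (hfg x hx)).1

theorem abs_neumannInverse_sub_le (hw : Continuous w) (hw0 : ∀ x, 0 < w x) (hq : 0 < q)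
    (hf : Continuous f) {C : ℝ} (hC : ∀ x ∈ Icc 0 L, |neumannSlope w q L f x| ≤ C) :
    ∀ s ∈ Icc 0 L, ∀ t ∈ Icc 0 L,
      |neumannInverse w q L f s - neumannInverse w q L f t| ≤ C * |s - t| := by
  intro s hs t ht
  have hint : ∀ a b, IntervalIntegrable (neumannSlope w q L f) volume a b :=
    (continuous_neumannSlope hw hw0 hq hf).intervalIntegrable
  rw [neumannInverse, neumannInverse, intervalIntegral.integral_interval_sub_left (hint _ _)
    (hint _ _)]
  exact intervalIntegral.norm_integral_le_of_norm_le_const (f := neumannSlope w q L f) fun x hx =>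
    hC x (uIcc_subset_Icc ht hs (uIoc_subset_uIcc hx))

/-- `neumannInverse` as a map of the space of continuous functions on `[0, L]`. -/
noncomputable def neumannOperator (hw : Continuous w) (hw0 : ∀ x, 0 < w x) (hq : 0 < q)
    (hL : 0 ≤ L) (f : C(Icc 0 L, ℝ)) : C(Icc 0 L, ℝ) where
  toFun t := neumannInverse w q L (IccExtend hL f) t
  continuous_toFun := (continuous_neumannInverse hw hw0 hq f.continuous.Icc_extend').comp
    continuous_subtype_val

section NeumannOperator

variable (hw : Continuous w) (hw0 : ∀ x, 0 < w x) (hq : 0 < q)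
include hw hw0 hq

theorem continuous_neumannOperator (hL : 0 ≤ L) :
    Continuous (neumannOperator hw hw0 hq hL) := by
  refine ContinuousMap.continuous_of_continuous_uncurry _ ?_
  refine continuous_neumannInverse_comp hw hw0 hq
    (F := fun z : C(Icc 0 L, ℝ) × Icc 0 L => IccExtend hL z.1) ?_
    (continuous_subtype_val.comp continuous_snd)
  have : Continuous (projIcc 0 L hL) := continuous_projIcc
  simp only [Function.uncurry_def, IccExtend_apply]
  fun_prop

theorem neumannOperator_smul (hL : 0 ≤ L) (c : ℝ) (f : C(Icc 0 L, ℝ)) :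
    neumannOperator hw hw0 hq hL (c • f) = c • neumannOperator hw hw0 hq hL f := by
  ext t
  exact neumannInverse_const_mul hq c t

theorem exists_isCompact_neumannOperator_mem (hL : 0 ≤ L) :
    ∃ K : Set C(Icc 0 L, ℝ), IsCompact K ∧ ∀ f, ‖f‖ ≤ 1 → neumannOperator hw hw0 hq hL f ∈ K := by
  obtain ⟨C, hC⟩ := isCompact_Icc.exists_bound_of_continuousOn (s := Icc 0 L)
    (continuous_neumannSlope (L := L) hw hw0 hq (continuous_const (y := (1 : ℝ)))).continuousOn
  have hC0 : 0 ≤ C := (norm_nonneg _).trans (hC 0 (left_mem_Icc.2 hL))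
  refine ⟨_, isCompact_setOf_lipschitzWith_abs_le _ C.toNNReal (C * L), fun f hf => ?_⟩
  have hslope : ∀ s ∈ Icc 0 L, |neumannSlope w q L (IccExtend hL f) s| ≤ C := fun s hs =>
    (abs_neumannSlope_le hw hw0 hq f.continuous.Icc_extend' continuous_const hs.2
      fun x _ => (f.norm_coe_le_norm _).trans hf).trans ((le_abs_self _).trans (hC s hs))
  have hlip := abs_neumannInverse_sub_le hw hw0 hq f.continuous.Icc_extend' hslope
  refine ⟨LipschitzWith.of_dist_le_mul fun s t => ?_, fun t => ?_⟩
  · rw [Real.coe_toNNReal C hC0]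
    exact hlip s s.2 t t.2
  · have h := hlip t t.2 0 (left_mem_Icc.2 hL)
    rw [neumannInverse_zero, sub_zero, sub_zero, abs_of_nonneg t.2.1] at h
    exact h.trans (mul_le_mul_of_nonneg_left t.2.2 hC0)

theorem exists_smul_le_neumannOperator_sub (hL : 0 < L) {f g : C(Icc 0 L, ℝ)} (hfg : f < g) :
    ∃ ε : ℝ, 0 < ε ∧ ε • ContinuousMap.restrict (Icc 0 L) (.id ℝ) +
      neumannOperator hw hw0 hq hL.le f ≤ neumannOperator hw hw0 hq hL.le g := by
  obtain ⟨hle, t, ht⟩ := Pi.lt_def.1 (show (f : Icc 0 L → ℝ) < g from hfg)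
  obtain ⟨ε, hε, h⟩ := exists_pos_mul_le_neumannInverse_sub hL hw hw0 hq
    (f.continuous.Icc_extend' (h := hL.le)) (g.continuous.Icc_extend' (h := hL.le))
    (fun x _ => hle (projIcc 0 L hL.le x)) ⟨t, t.2, by simpa using ht⟩
  exact ⟨ε, hε, fun t => le_sub_iff_add_le.1 (h t t.2)⟩

theorem exists_neumannOperator_le_smul (hL : 0 ≤ L) (f : C(Icc 0 L, ℝ)) :
    ∃ C : ℝ, neumannOperator hw hw0 hq hL f ≤
      C • ContinuousMap.restrict (Icc 0 L) (.id ℝ) := by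
  obtain ⟨C, hC⟩ := isCompact_Icc.exists_bound_of_continuousOn (s := Icc 0 L)
    (continuous_neumannSlope (L := L) hw hw0 hq
      (f.continuous.Icc_extend' (h := hL))).continuousOn
  refine ⟨C, fun t => ?_⟩
  have h := abs_neumannInverse_sub_le hw hw0 hq f.continuous.Icc_extend' hC t t.2 0
    (left_mem_Icc.2 hL)
  rw [neumannInverse_zero, sub_zero, sub_zero, abs_of_nonneg t.2.1] at h
  exact (le_abs_self _).trans h

theorem exists_neumannInverse_eigenfunction (hL : 0 < L) :
    ∃ c > 0, ∃ g : ℝ → ℝ, Continuous g ∧ (∀ t ∈ Ioc 0 L, 0 < g t) ∧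
      ∀ t ∈ Icc 0 L, neumannInverse w q L g t = c * g t := by
  have he : (0 : C(Icc 0 L, ℝ)) < ContinuousMap.restrict (Icc 0 L) (.id ℝ) := by
    refine lt_of_le_of_ne (fun t => t.2.1) fun h => hL.ne ?_
    exact congr($h ⟨L, right_mem_Icc.2 hL.le⟩)
  obtain ⟨K, hK, hTK⟩ := exists_isCompact_neumannOperator_mem hw hw0 hq hL.le
  obtain ⟨c, hc, g, hg, hTg⟩ := exists_pos_eigenvector_of_compact
    (E := C(Icc 0 L, ℝ)) (fun _ _ => norm_le_norm_of_nonneg_of_le)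
    (continuous_neumannOperator hw hw0 hq hL.le).continuousOn
    (fun c f _ _ => neumannOperator_smul hw hw0 hq hL.le c f) hK (fun f _ hf => hTK f hf.le) he
    (fun f _ => exists_neumannOperator_le_smul hw hw0 hq hL.le f)
    fun f g _ hfg => exists_smul_le_neumannOperator_sub hw hw0 hq hL hfg
  have hTg' : ∀ t (ht : t ∈ Icc 0 L),
      neumannInverse w q L (IccExtend hL.le g) t = c * g ⟨t, ht⟩ := fun t ht =>
    congr($hTg ⟨t, ht⟩)
  obtain ⟨ε, hε, hεg⟩ := exists_smul_le_neumannOperator_sub hw hw0 hq hL hg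
  refine ⟨c, hc, IccExtend hL.le g, g.continuous.Icc_extend', fun t ht => ?_, fun t ht => ?_⟩
  · have h := hεg ⟨t, Ioc_subset_Icc_self ht⟩
    have h0 : neumannOperator hw hw0 hq hL.le 0 = 0 := by
      simpa using neumannOperator_smul hw hw0 hq hL.le 0 0
    rw [h0, add_zero, hTg] at h
    rw [IccExtend_of_mem _ _ (Ioc_subset_Icc_self ht)]
    exact pos_of_mul_pos_right ((mul_pos hε ht.1).trans_le h) hc.le
  · rw [hTg' t ht, IccExtend_of_mem]

end NeumannOperator

end NeumannInverse

section Picone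

variable {p a : ℝ}

/-- **Picone's inequality**: the left-hand side is `|v|^{p-2} v` times the derivative of
`|h|^p f^{1-p}` at a point where `h = x`, `h' = y`, `f = a`, `f' = v`. -/
theorem sgnPow_mul_le_abs_rpow (hp : 1 < p) (ha : 0 < a) (x y v : ℝ) :
    sgnPow (p - 1) v * (p * sgnPow (p - 1) x * y * a ^ (1 - p) +
      |x| ^ p * (v * (1 - p) * a ^ (-p))) ≤ |y| ^ p := by
  have hz : |x * v * a⁻¹| ^ p = |x| ^ p * (sgnPow (p - 1) v * v) * a ^ (-p) := by
    rw [abs_mul, abs_mul, Real.mul_rpow (by positivity) (by positivity),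
      Real.mul_rpow (abs_nonneg x) (abs_nonneg v), abs_of_pos (inv_pos.2 ha), Real.inv_rpow ha.le,
      ← Real.rpow_neg ha.le, sgnPow_mul_self hp]
  have hs : sgnPow (p - 1) (x * v * a⁻¹) =
      sgnPow (p - 1) x * sgnPow (p - 1) v * a ^ (1 - p) := by
    rw [sgnPow_mul, sgnPow_mul, sgnPow_of_nonneg (sub_pos.2 hp) (inv_pos.2 ha).le,
      Real.inv_rpow ha.le, ← Real.rpow_neg ha.le, neg_sub]
  have htangent := abs_rpow_add_mul_sub_le hp (x * v * a⁻¹) y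
  have hself := sgnPow_mul_self hp (x * v * a⁻¹)
  rw [hs, hz] at hself
  rw [hs, hz] at htangent
  linear_combination htangent + p * hself

theorem rpow_one_sub_mul_sgnPow (hp : 1 < p) (ha : 0 < a) :
    a ^ (1 - p) * sgnPow (p - 1) a = 1 := by
  rw [sgnPow_of_nonneg (sub_pos.2 hp) ha.le, ← Real.rpow_add ha, sub_add_sub_cancel', sub_self,
    Real.rpow_zero]

theorem rpow_one_sub_mul_sgnPow_mem_Icc (hp : 1 < p) (ha : 0 < a) {δ : ℝ} (hδ : 0 ≤ δ) :
    (a + δ) ^ (1 - p) * sgnPow (p - 1) a ∈ Icc 0 1 := by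
  have hsgn : 0 ≤ sgnPow (p - 1) a := ((sgnPow_pos_iff (sub_pos.2 hp)).2 ha).le
  refine ⟨by positivity, ?_⟩
  calc (a + δ) ^ (1 - p) * sgnPow (p - 1) a ≤ a ^ (1 - p) * sgnPow (p - 1) a :=
        mul_le_mul_of_nonneg_right (Real.rpow_le_rpow_of_nonpos ha (le_add_of_nonneg_right hδ)
          (sub_nonpos.2 hp.le)) hsgn
    _ = 1 := rpow_one_sub_mul_sgnPow hp ha

end Picone

/-- `φ`, with derivative `γ`, is an odd solution of the Neumann problem
`(w |φ'|^{p-2} φ')' = -ν w |φ|^{p-2} φ` on `[-L, L]`, positive on `(0, L]`. The equation and the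
boundary condition are encoded together by integrating the equation from `s` to `L`. -/
structure IsOddNeumannEigenpair (w : ℝ → ℝ) (p L ν : ℝ) (φ γ : ℝ → ℝ) : Prop where
  hasDerivAt : ∀ t, HasDerivAt φ (γ t) t
  continuous_deriv : Continuous γ
  odd : Function.Odd φ
  pos : ∀ t ∈ Ioc 0 L, 0 < φ t
  flux_eq : ∀ s ∈ Icc (-L) L,
    w s * sgnPow (p - 1) (γ s) = ν * ∫ x in s..L, w x * sgnPow (p - 1) (φ x)

namespace IsOddNeumannEigenpair

variable {w φ γ h : ℝ → ℝ} {p L ν δ : ℝ} {K : NNReal}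

theorem continuous (H : IsOddNeumannEigenpair w p L ν φ γ) : Continuous φ :=
  continuous_iff_continuousAt.2 fun t => (H.hasDerivAt t).continuousAt

theorem contDiff (H : IsOddNeumannEigenpair w p L ν φ γ) : ContDiff ℝ 1 φ :=
  contDiff_one_iff_deriv.2 ⟨fun t => (H.hasDerivAt t).differentiableAt, by
    rw [funext fun t => (H.hasDerivAt t).deriv]
    exact H.continuous_deriv⟩

theorem nonneg (H : IsOddNeumannEigenpair w p L ν φ γ) {t : ℝ} (ht : t ∈ Icc 0 L) : 0 ≤ φ t := by
  rcases ht.1.eq_or_lt with rfl | h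
  · exact H.odd.map_zero.ge
  · exact (H.pos t ⟨h, ht.2⟩).le

theorem continuous_mul_sgnPow (H : IsOddNeumannEigenpair w p L ν φ γ) (hp : 1 < p)
    (hw : Continuous w) : Continuous fun x => w x * sgnPow (p - 1) (φ x) :=
  hw.mul ((continuous_sgnPow (sub_pos.2 hp)).comp H.continuous)

theorem hasDerivAt_integral (H : IsOddNeumannEigenpair w p L ν φ γ) (hp : 1 < p)
    (hw : Continuous w) (t : ℝ) :
    HasDerivAt (fun s => ν * ∫ x in s..L, w x * sgnPow (p - 1) (φ x))
      (-ν * (w t * sgnPow (p - 1) (φ t))) t := by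
  have hc := H.continuous_mul_sgnPow hp hw
  refine ((intervalIntegral.integral_hasDerivAt_left (hc.intervalIntegrable t L)
    (hc.stronglyMeasurableAtFilter _ _) hc.continuousAt).const_mul ν).congr_deriv ?_
  ring

theorem hasDerivAt_flux (H : IsOddNeumannEigenpair w p L ν φ γ) (hp : 1 < p)
    (hw : Continuous w) {t : ℝ} (ht : t ∈ Ioo (-L) L) :
    HasDerivAt (fun s => w s * sgnPow (p - 1) (γ s)) (-ν * (w t * sgnPow (p - 1) (φ t))) t :=
  (H.hasDerivAt_integral hp hw t).congr_of_eventuallyEq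
    (eventually_of_mem (Icc_mem_nhds ht.1 ht.2) H.flux_eq)

theorem deriv_pos (H : IsOddNeumannEigenpair w p L ν φ γ) (hp : 1 < p)
    (hw : Continuous w) (hw0 : ∀ x, 0 < w x) (hν : 0 < ν) {t : ℝ} (ht : t ∈ Ico 0 L) :
    0 < γ t := by
  have hp1 : 0 < p - 1 := sub_pos.2 hp
  rw [← sgnPow_pos_iff hp1, ← mul_pos_iff_of_pos_left (hw0 t),
    H.flux_eq t ⟨by linarith [ht.1, ht.2], ht.2.le⟩]
  refine mul_pos hν (intervalIntegral.intervalIntegral_pos_of_pos_on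
    ((H.continuous_mul_sgnPow hp hw).intervalIntegrable _ _) (fun x hx => ?_) ht.2)
  exact mul_pos (hw0 x) ((sgnPow_pos_iff hp1).2 (H.pos x ⟨ht.1.trans_lt hx.1, hx.2.le⟩))

theorem deriv_eq_zero (H : IsOddNeumannEigenpair w p L ν φ γ) (hp : 1 < p)
    (hw0 : ∀ x, 0 < w x) (hL : 0 ≤ L) : γ L = 0 := by
  have h := H.flux_eq L ⟨by linarith, le_rfl⟩
  rw [intervalIntegral.integral_same, mul_zero, mul_eq_zero_iff_left (hw0 L).ne'] at h
  exact (strictMono_sgnPow (sub_pos.2 hp)).injective (h.trans sgnPow_zero.symm)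

theorem absolutelyContinuousOnInterval_picone (H : IsOddNeumannEigenpair w p L ν φ γ)
    (hp : 1 < p) (hL : 0 ≤ L) (hh : LipschitzWith K h) (hδ : 0 < δ) :
    AbsolutelyContinuousOnInterval (fun t => |h t| ^ p * (φ t + δ) ^ (1 - p)) 0 L := by
  refine (absolutelyContinuousOnInterval_of_locallyLipschitz
    (locallyLipschitz_abs_rpow hp hh.locallyLipschitz) 0 L).fun_mul
    (ContDiffOn.absolutelyContinuousOnInterval ?_)
  rw [uIcc_of_le hL]
  exact (H.contDiff.add contDiff_const).contDiffOn.rpow_const_of_ne fun t ht =>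
    (add_pos_of_nonneg_of_pos (H.nonneg ht) hδ).ne'

theorem deriv_picone_mul_flux_le (H : IsOddNeumannEigenpair w p L ν φ γ) (hp : 1 < p)
    (hw0 : ∀ x, 0 < w x) (hδ : 0 < δ) {t : ℝ} (ht : t ∈ Icc 0 L)
    (hht : DifferentiableAt ℝ h t) :
    deriv (fun t => |h t| ^ p * (φ t + δ) ^ (1 - p)) t * (w t * sgnPow (p - 1) (γ t)) ≤
      |deriv h t| ^ p * w t := by
  have ha : 0 < φ t + δ := add_pos_of_nonneg_of_pos (H.nonneg ht) hδ
  have hd := ((hasDerivAt_abs_rpow_sgnPow hp (h t)).comp t hht.hasDerivAt).fun_mul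
    (((H.hasDerivAt t).add_const δ).rpow_const (p := 1 - p) (.inl ha.ne'))
  rw [show (1 - p - 1 : ℝ) = -p by ring] at hd
  rw [show deriv (fun t => |h t| ^ p * (φ t + δ) ^ (1 - p)) t = _ from hd.deriv,
    mul_comm (w t), ← mul_assoc, mul_comm _ (sgnPow _ _)]
  exact mul_le_mul_of_nonneg_right (sgnPow_mul_le_abs_rpow hp ha _ _ _) (hw0 t).le

/-- Test the equation with `|h|^p (φ + δ)^{1-p}`. The shift by `δ` keeps the test function
absolutely continuous up to the zero of `φ`. -/
theorem hardy_le_of_pos (H : IsOddNeumannEigenpair w p L ν φ γ) (hp : 1 < p) (hL : 0 ≤ L)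
    (hw : Continuous w) (hw0 : ∀ x, 0 < w x) (hh : LipschitzWith K h) (hh0 : h 0 = 0)
    (hδ : 0 < δ) :
    ν * ∫ t in (0 : ℝ)..L, |h t| ^ p * (φ t + δ) ^ (1 - p) * (w t * sgnPow (p - 1) (φ t)) ≤
      ∫ t in (0 : ℝ)..L, |deriv h t| ^ p * w t := by
  set U : ℝ → ℝ := fun t => |h t| ^ p * (φ t + δ) ^ (1 - p) with hUdef
  set Z : ℝ → ℝ := fun s => ν * ∫ x in s..L, w x * sgnPow (p - 1) (φ x) with hZdef
  have hU : AbsolutelyContinuousOnInterval U 0 L :=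
    H.absolutelyContinuousOnInterval_picone hp hL hh hδ
  have hZ' : deriv Z = fun t => -ν * (w t * sgnPow (p - 1) (φ t)) :=
    funext fun t => (H.hasDerivAt_integral hp hw t).deriv
  have hZ : ContDiff ℝ 1 Z :=
    contDiff_one_iff_deriv.2 ⟨fun t => (H.hasDerivAt_integral hp hw t).differentiableAt,
      hZ' ▸ (H.continuous_mul_sgnPow hp hw).const_mul (-ν)⟩
  have hparts : ν * ∫ t in (0 : ℝ)..L, U t * (w t * sgnPow (p - 1) (φ t)) =
      ∫ t in (0 : ℝ)..L, deriv U t * Z t := by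
    have h := hU.integral_mul_deriv_eq_deriv_mul hZ.contDiffOn.absolutelyContinuousOnInterval
    have hU0 : U 0 = 0 := by simp [hUdef, hh0, Real.zero_rpow (by linarith : p ≠ 0)]
    have hZL : Z L = 0 := by simp [hZdef]
    simp only [hZ', hU0, hZL, mul_left_comm _ (-ν), intervalIntegral.integral_const_mul] at h
    linarith
  rw [hparts]
  refine intervalIntegral.integral_mono_ae_restrict hL
    (hU.intervalIntegrable_deriv.mul_continuousOn hZ.continuous.continuousOn)
    (intervalIntegrable_abs_deriv_rpow_mul (by linarith) hw hh 0 L) ?_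
  filter_upwards [ae_restrict_of_ae hh.ae_differentiableAt_real,
    ae_restrict_mem measurableSet_Icc] with t hht ht
  rw [show Z t = _ from (H.flux_eq t ⟨by linarith [ht.1], ht.2⟩).symm]
  exact H.deriv_picone_mul_flux_le hp hw0 hδ ht hht

theorem tendsto_integral_hardy (H : IsOddNeumannEigenpair w p L ν φ γ) (hp : 1 < p) (hL : 0 ≤ L)
    (hw : Continuous w) (hw0 : ∀ x, 0 < w x) (hh : Continuous h) :
    Tendsto (fun δ => ∫ t in (0 : ℝ)..L,
        |h t| ^ p * (φ t + δ) ^ (1 - p) * (w t * sgnPow (p - 1) (φ t)))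
      (𝓝[>] 0) (𝓝 (∫ t in (0 : ℝ)..L, |h t| ^ p * w t)) := by
  have hφm := H.continuous.measurable
  have hsgn := (continuous_sgnPow (sub_pos.2 hp)).measurable
  have hwm := hw.measurable
  have hhm := hh.measurable
  have hbound := continuous_abs_rpow_mul (by linarith : 0 ≤ p) hh hw
  simp only [mul_mul_mul_comm _ (_ ^ (1 - p)) (w _)]
  refine intervalIntegral.tendsto_integral_filter_of_dominated_convergence
    (fun t => |h t| ^ p * w t)
    (.of_forall fun δ => Measurable.aestronglyMeasurable (by fun_prop)) ?_
    (hbound.intervalIntegrable 0 L) (ae_of_all _ fun t ht => ?_)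
  · refine eventually_mem_nhdsWithin.mono fun δ hδ => ae_of_all _ fun t ht => ?_
    have hφ := H.pos t (uIoc_of_le hL ▸ ht)
    have hφδ := rpow_one_sub_mul_sgnPow_mem_Icc hp hφ (mem_Ioi.1 hδ).le
    have hw0t := hw0 t
    rw [Real.norm_of_nonneg (mul_nonneg (by positivity) hφδ.1)]
    exact mul_le_of_le_one_right (by positivity) hφδ.2
  · have hφ := H.pos t (uIoc_of_le hL ▸ ht)
    have hlim : ContinuousAt (fun δ => (φ t + δ) ^ (1 - p) * sgnPow (p - 1) (φ t)) 0 :=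
      (ContinuousAt.rpow_const (by fun_prop) (.inl (by simpa using hφ.ne'))).mul_const _
    simpa [rpow_one_sub_mul_sgnPow hp hφ] using
      (hlim.tendsto.mono_left nhdsWithin_le_nhds).const_mul (|h t| ^ p * w t)

theorem hardy_le (H : IsOddNeumannEigenpair w p L ν φ γ) (hp : 1 < p) (hL : 0 ≤ L)
    (hw : Continuous w) (hw0 : ∀ x, 0 < w x) (hh : LipschitzWith K h) (hh0 : h 0 = 0) :
    ν * ∫ t in (0 : ℝ)..L, |h t| ^ p * w t ≤ ∫ t in (0 : ℝ)..L, |deriv h t| ^ p * w t :=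
  le_of_tendsto ((H.tendsto_integral_hardy hp hL hw hw0 hh.continuous).const_mul ν)
    (eventually_mem_nhdsWithin.mono fun _ hδ => H.hardy_le_of_pos hp hL hw hw0 hh hh0 hδ)

end IsOddNeumannEigenpair

section Existence

variable {w f g : ℝ → ℝ} {p q L s t : ℝ}

theorem mul_sgnPow_neumannSlope (hq : 0 < q) (hws : w s ≠ 0) :
    w s * sgnPow q (neumannSlope w q L f s) = ∫ x in s..L, w x * sgnPow q (f x) := by
  rw [neumannSlope, sgnPow_sgnPow_inv hq, mul_inv_cancel_left₀ hws]

theorem neumannSlope_congr (hs : s ≤ L) (hfg : EqOn f g (Icc s L)) :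
    neumannSlope w q L f s = neumannSlope w q L g s := by
  rw [neumannSlope, neumannSlope, intervalIntegral.integral_congr fun x hx => ?_]
  simp only [hfg (uIcc_of_le hs ▸ hx)]

theorem neumannInverse_congr (hfg : EqOn f g (Icc 0 L)) (ht : t ∈ Icc 0 L) :
    neumannInverse w q L f t = neumannInverse w q L g t :=
  intervalIntegral.integral_congr fun s hs => by
    rw [uIcc_of_le ht.1] at hs
    exact neumannSlope_congr (hs.2.trans ht.2) (hfg.mono (Icc_subset_Icc_left hs.1))

theorem even_neumannSlope (hw : Continuous w) (hwe : Function.Even w) (hq : 0 < q)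
    (hf : Continuous f) (hfo : Function.Odd f) : Function.Even (neumannSlope w q L f) := by
  intro s
  have hc : Continuous fun x => w x * sgnPow q (f x) :=
    hw.mul ((continuous_sgnPow hq).comp hf)
  rw [neumannSlope, neumannSlope, hwe.eq, integral_neg_left_of_odd hc fun x => ?_]
  rw [hwe.eq, hfo.eq, sgnPow_neg, mul_neg]

theorem odd_neumannInverse (hw : Continuous w) (hwe : Function.Even w) (hq : 0 < q)
    (hf : Continuous f) (hfo : Function.Odd f) : Function.Odd (neumannInverse w q L f) := by
  intro t
  have h := intervalIntegral.integral_comp_neg (a := 0) (b := t) (neumannSlope w q L f)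
  simp only [(even_neumannSlope hw hwe hq hf hfo).eq, neg_zero] at h
  rw [neumannInverse, neumannInverse, h, intervalIntegral.integral_symm]

theorem exists_odd_neumannInverse_eigenfunction (hw : Continuous w) (hw0 : ∀ x, 0 < w x)
    (hwe : Function.Even w) (hq : 0 < q) (hL : 0 < L) :
    ∃ c > 0, ∃ g : ℝ → ℝ, Continuous g ∧ Function.Odd g ∧ (∀ t ∈ Ioc 0 L, 0 < g t) ∧
      ∀ t ∈ Icc (-L) L, neumannInverse w q L g t = c * g t := by
  obtain ⟨c, hc, f, hf, hfpos, heq⟩ := exists_neumannInverse_eigenfunction hw hw0 hq hL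
  have hf0 : f 0 = 0 := by simpa [neumannInverse_zero, hc.ne'] using heq 0 ⟨le_rfl, hL.le⟩
  obtain ⟨g, hg, hgo, hgf⟩ := exists_continuous_odd_eqOn_Ici hf hf0
  have hright : ∀ t ∈ Icc 0 L, neumannInverse w q L g t = c * g t := fun t ht => by
    rw [neumannInverse_congr (hgf.mono Icc_subset_Ici_self) ht, heq t ht, hgf ht.1]
  refine ⟨c, hc, g, hg, hgo, fun t ht => (hgf ht.1.le).symm ▸ hfpos t ht, fun t ht => ?_⟩
  rcases le_total 0 t with h | h
  · exact hright t ⟨h, ht.2⟩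
  · have hneg := hright (-t) ⟨neg_nonneg.2 h, neg_le.1 ht.1⟩
    rwa [(odd_neumannInverse hw hwe hq hg hgo).eq, hgo.eq, mul_neg, neg_inj] at hneg

theorem exists_isOddNeumannEigenpair (hp : 1 < p) (hL : 0 < L) (hw : Continuous w)
    (hw0 : ∀ x, 0 < w x) (hwe : Function.Even w) :
    ∃ ν > 0, ∃ φ γ : ℝ → ℝ, IsOddNeumannEigenpair w p L ν φ γ := by
  have hp1 : 0 < p - 1 := sub_pos.2 hp
  obtain ⟨c, hc, g, hg, hgo, hgpos, heq⟩ :=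
    exists_odd_neumannInverse_eigenfunction hw hw0 hwe hp1 hL
  have hslope := continuous_neumannSlope (L := L) hw hw0 hp1 hg
  refine ⟨sgnPow (p - 1) c⁻¹, (sgnPow_pos_iff hp1).2 (inv_pos.2 hc),
    neumannInverse w (p - 1) L g, neumannSlope w (p - 1) L g,
    fun t => (hslope.integral_hasStrictDerivAt 0 t).hasDerivAt, hslope,
    odd_neumannInverse hw hwe hp1 hg hgo, fun t ht => ?_, fun s hs => ?_⟩
  · rw [heq t ⟨by linarith [ht.1], ht.2⟩]
    exact mul_pos hc (hgpos t ht)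
  · rw [mul_sgnPow_neumannSlope hp1 (hw0 s).ne', ← intervalIntegral.integral_const_mul]
    refine intervalIntegral.integral_congr fun x hx => ?_
    rw [uIcc_of_le hs.2] at hx
    simp only [heq x ⟨hs.1.trans hx.1, hx.2⟩]
    rw [mul_left_comm, ← sgnPow_mul, inv_mul_cancel_left₀ hc.ne']

end Existence

/-- The first nonzero Neumann eigenvalue of the one-dimensional `p`-Laplacian on `[-L, L]` with
weight `w`, defined variationally; `rayleighNeumann p κ D` is the case of the Gaussian weight
`exp (-κ s² / 2)` and `L = D / 2`. -/
noncomputable def weightedRayleigh (w : ℝ → ℝ) (p L : ℝ) : ℝ :=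
  sInf { r : ℝ | ∃ φ : ℝ → ℝ,
    (∃ K : NNReal, LipschitzOnWith K φ (Icc (-L) L)) ∧
    ¬ (∀ s ∈ Icc (-L) L, φ s = 0) ∧
    (∫ s in -L..L, sgnPow (p - 1) (φ s) * w s) = 0 ∧
    r = (∫ s in -L..L, |deriv φ s| ^ p * w s) / (∫ s in -L..L, |φ s| ^ p * w s) }

namespace IsOddNeumannEigenpair

variable {w φ γ f h : ℝ → ℝ} {p L ν : ℝ} {K : NNReal}

theorem exists_lipschitzOnWith (H : IsOddNeumannEigenpair w p L ν φ γ) :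
    ∃ K : NNReal, LipschitzOnWith K φ (Icc (-L) L) :=
  H.contDiff.contDiffOn.exists_lipschitzOnWith one_ne_zero (convex_Icc _ _) isCompact_Icc

theorem not_forall_eq_zero (H : IsOddNeumannEigenpair w p L ν φ γ) (hL : 0 < L) :
    ¬ ∀ s ∈ Icc (-L) L, φ s = 0 := fun h =>
  (H.pos L ⟨hL, le_rfl⟩).ne' (h L ⟨by linarith, le_rfl⟩)

theorem integral_mul_sgnPow_eq_zero (H : IsOddNeumannEigenpair w p L ν φ γ) (hp : 1 < p)
    (hw : Continuous w) (hwe : Function.Even w) :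
    ∫ s in -L..L, w s * sgnPow (p - 1) (φ s) = 0 := by
  rw [integral_neg_left_of_odd (H.continuous_mul_sgnPow hp hw) fun s => ?_,
    intervalIntegral.integral_same]
  rw [H.odd.eq, sgnPow_neg, hwe.eq, mul_neg]

/-- Test the equation with `φ`. -/
theorem integral_abs_deriv_rpow (H : IsOddNeumannEigenpair w p L ν φ γ) (hp : 1 < p)
    (hL : 0 ≤ L) (hw : Continuous w) (hwe : Function.Even w) :
    ∫ s in -L..L, |deriv φ s| ^ p * w s = ν * ∫ s in -L..L, |φ s| ^ p * w s := by
  have hderiv : ∀ s ∈ uIcc (-L) L,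
      HasDerivAt (fun s => (ν * ∫ x in s..L, w x * sgnPow (p - 1) (φ x)) * φ s)
        (|γ s| ^ p * w s - ν * (|φ s| ^ p * w s)) s := fun s hs => by
    rw [uIcc_of_le (by linarith)] at hs
    refine ((H.hasDerivAt_integral hp hw s).mul (H.hasDerivAt s)).congr_deriv ?_
    rw [← H.flux_eq s hs, ← sgnPow_mul_self hp (γ s), ← sgnPow_mul_self hp (φ s)]
    ring
  have hp0 : 0 ≤ p := by linarith
  have hγ := (continuous_abs_rpow_mul hp0 H.continuous_deriv hw).intervalIntegrable
    (μ := volume) (-L) L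
  have hφ := ((continuous_abs_rpow_mul hp0 H.continuous hw).const_mul ν).intervalIntegrable
    (μ := volume) (-L) L
  have hparts := intervalIntegral.integral_eq_sub_of_hasDerivAt hderiv (hγ.sub hφ)
  rw [intervalIntegral.integral_sub hγ hφ, intervalIntegral.integral_const_mul,
    intervalIntegral.integral_same, H.integral_mul_sgnPow_eq_zero hp hw hwe] at hparts
  simp only [fun s => (H.hasDerivAt s).deriv]
  linarith

theorem hardy_le_symm (H : IsOddNeumannEigenpair w p L ν φ γ) (hp : 1 < p) (hL : 0 ≤ L)
    (hw : Continuous w) (hw0 : ∀ x, 0 < w x) (hwe : Function.Even w) (hh : LipschitzWith K h)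
    (hh0 : h 0 = 0) :
    ν * ∫ t in -L..L, |h t| ^ p * w t ≤ ∫ t in -L..L, |deriv h t| ^ p * w t := by
  have hpow := continuous_abs_rpow_mul (by linarith : 0 ≤ p) hh.continuous hw
  have hneg : LipschitzWith K fun t => h (-t) :=
    LipschitzWith.of_dist_le_mul fun x y => by simpa using hh.dist_le_mul (-x) (-y)
  have hleft := H.hardy_le hp hL hw hw0 hneg (by simpa using hh0)
  simp only [deriv_comp_neg, abs_neg] at hleft
  rw [integral_eq_integral_comp_neg_add hpow.intervalIntegrable,
    integral_eq_integral_comp_neg_add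
      (intervalIntegrable_abs_deriv_rpow_mul (by linarith) hw hh), mul_add]
  simp only [hwe.eq]
  exact add_le_add hleft (H.hardy_le hp hL hw hw0 hh hh0)

theorem mul_integral_le_of_mean_eq_zero (H : IsOddNeumannEigenpair w p L ν φ γ) (hp : 1 < p)
    (hL : 0 ≤ L) (hν : 0 ≤ ν) (hw : Continuous w) (hw0 : ∀ x, 0 < w x) (hwe : Function.Even w)
    (hf : LipschitzOnWith K f (Icc (-L) L))
    (hmean : ∫ s in -L..L, sgnPow (p - 1) (f s) * w s = 0) :
    ν * ∫ s in -L..L, |f s| ^ p * w s ≤ ∫ s in -L..L, |deriv f s| ^ p * w s := by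
  have hLL : -L ≤ L := by linarith
  obtain ⟨F, hF, hfF⟩ := hf.extend_real
  have hcongr : ∀ G : ℝ → ℝ, ∫ s in -L..L, G (f s) * w s = ∫ s in -L..L, G (F s) * w s :=
    fun G => intervalIntegral.integral_congr fun s hs => by
      simp only [hfF (uIcc_of_le hLL ▸ hs)]
  rw [hcongr (sgnPow (p - 1))] at hmean
  have hlip : LipschitzWith K fun s => F s - F 0 :=
    LipschitzWith.of_dist_le_mul fun x y => by simpa [dist_sub_right] using hF.dist_le_mul x y
  calc ν * ∫ s in -L..L, |f s| ^ p * w s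
      = ν * ∫ s in -L..L, |F s| ^ p * w s := by rw [hcongr fun x => |x| ^ p]
    _ ≤ ν * ∫ s in -L..L, |F s - F 0| ^ p * w s :=
        mul_le_mul_of_nonneg_left (integral_abs_rpow_mul_le_integral_sub_const hp hLL hw
          (fun x => (hw0 x).le) hF.continuous hmean (F 0)) hν
    _ ≤ ∫ s in -L..L, |deriv (fun s => F s - F 0) s| ^ p * w s :=
        H.hardy_le_symm hp hL hw hw0 hwe hlip (sub_self (F 0))
    _ = ∫ s in -L..L, |deriv f s| ^ p * w s := by
        simp only [deriv_sub_const, integral_abs_deriv_rpow_mul_congr hLL hfF]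

theorem rayleigh_quotient_eq (H : IsOddNeumannEigenpair w p L ν φ γ) (hp : 1 < p)
    (hL : 0 < L) (hw : Continuous w) (hw0 : ∀ x, 0 < w x) (hwe : Function.Even w) :
    (∫ s in -L..L, |deriv φ s| ^ p * w s) / (∫ s in -L..L, |φ s| ^ p * w s) = ν := by
  have hpos := integral_abs_rpow_mul_pos (p := p) (by linarith) hw.continuousOn
    (fun x _ => hw0 x) (by linarith) H.continuous.continuousOn (H.not_forall_eq_zero hL)
  rw [H.integral_abs_deriv_rpow hp hL.le hw hwe, mul_div_cancel_right₀ _ hpos.ne']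

theorem weightedRayleigh_eq (H : IsOddNeumannEigenpair w p L ν φ γ) (hp : 1 < p) (hL : 0 < L)
    (hν : 0 ≤ ν) (hw : Continuous w) (hw0 : ∀ x, 0 < w x) (hwe : Function.Even w) :
    weightedRayleigh w p L = ν := by
  refine IsLeast.csInf_eq ⟨⟨φ, H.exists_lipschitzOnWith, H.not_forall_eq_zero hL, ?_,
    (H.rayleigh_quotient_eq hp hL hw hw0 hwe).symm⟩, ?_⟩
  · simpa only [mul_comm] using H.integral_mul_sgnPow_eq_zero hp hw hwe
  · rintro r ⟨f, ⟨K, hf⟩, hf0, hmean, rfl⟩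
    rw [le_div_iff₀ (integral_abs_rpow_mul_pos (by linarith) hw.continuousOn (fun x _ => hw0 x)
      (by linarith) hf.continuousOn hf0)]
    exact H.mul_integral_le_of_mean_eq_zero hp hL.le hν hw hw0 hwe hf hmean

end IsOddNeumannEigenpair

theorem exists_odd_eigenfunction_rayleighNeumann_general {w : ℝ → ℝ} {p L : ℝ} (hp : 1 < p)
    (hL : 0 < L) (hw : Continuous w) (hw0 : ∀ x, 0 < w x) (hwe : Function.Even w) :
    ∃ φ g : ℝ → ℝ,
      (∀ t ∈ Icc (-L) L, HasDerivAt φ (g t) t) ∧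
      ContinuousOn g (Icc (-L) L) ∧
      (∀ t ∈ Icc (-L) L, φ (-t) = -φ t) ∧
      ¬ (∀ s ∈ Icc (-L) L, φ s = 0) ∧
      (∀ t ∈ Ioo (-L) L,
        HasDerivAt (fun s => w s * sgnPow (p - 1) (g s))
          (-(weightedRayleigh w p L) * (w t * sgnPow (p - 1) (φ t))) t) ∧
      φ 0 = 0 ∧
      (∀ t ∈ Ioc (0 : ℝ) L, 0 < φ t) ∧
      (∀ t ∈ Ioo (0 : ℝ) L, 0 < g t) ∧
      g L = 0 ∧
      (∃ K : NNReal, LipschitzOnWith K φ (Icc (-L) L)) ∧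
      (∫ s in -L..L, sgnPow (p - 1) (φ s) * w s) = 0 ∧
      (∫ s in -L..L, |deriv φ s| ^ p * w s) / (∫ s in -L..L, |φ s| ^ p * w s) =
        weightedRayleigh w p L := by
  obtain ⟨ν, hν, φ, γ, H⟩ := exists_isOddNeumannEigenpair hp hL hw hw0 hwe
  rw [H.weightedRayleigh_eq hp hL hν.le hw hw0 hwe]
  refine ⟨φ, γ, fun t _ => H.hasDerivAt t, H.continuous_deriv.continuousOn, fun t _ => H.odd t,
    H.not_forall_eq_zero hL, fun t => H.hasDerivAt_flux hp hw, H.odd.map_zero, H.pos,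
    fun t ht => H.deriv_pos hp hw hw0 hν (Ioo_subset_Ico_self ht), H.deriv_eq_zero hp hw0 hL.le,
    H.exists_lipschitzOnWith, ?_, H.rayleigh_quotient_eq hp hL hw hw0 hwe⟩
  simpa only [mul_comm] using H.integral_mul_sgnPow_eq_zero hp hw hwe

/-- **Existence of an odd, increasing eigenfunction realizing `μ_p(κ, D)`.**
There exists an odd `C¹` function `φ` on `[-D/2, D/2]` (with continuous derivative `g`),
not identically zero, such that:
(i) `t ↦ e^{-κ t²/2} |φ'|^{p-2} φ'` is differentiable on `(-D/2, D/2)` with derivative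
    `-μ_p(κ,D) e^{-κ t²/2} |φ|^{p-2} φ`;
(ii) `φ 0 = 0`, `φ > 0` on `(0, D/2]`, `φ' > 0` on `(0, D/2)`, and `φ'(D/2) = 0`;
(iii) `φ` is admissible for the infimum defining `μ_p(κ,D)` and its Rayleigh quotient
      equals `μ_p(κ,D)`. -/
theorem exists_odd_eigenfunction_rayleighNeumann (p κ D : ℝ) (hp : 1 < p) (hD : 0 < D) :
    ∃ φ g : ℝ → ℝ,
      -- φ is C¹ on [-D/2, D/2] with derivative g
      (∀ t ∈ Set.Icc (-(D / 2)) (D / 2), HasDerivAt φ (g t) t) ∧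
      ContinuousOn g (Set.Icc (-(D / 2)) (D / 2)) ∧
      -- φ is odd
      (∀ t ∈ Set.Icc (-(D / 2)) (D / 2), φ (-t) = -φ t) ∧
      -- not identically zero
      ¬ (∀ s ∈ Set.Icc (-(D / 2)) (D / 2), φ s = 0) ∧
      -- (i) the ODE in divergence form on the open interval
      (∀ t ∈ Set.Ioo (-(D / 2)) (D / 2),
        HasDerivAt (fun s => Real.exp (-κ * s ^ 2 / 2) * sgnPow (p - 1) (g s))
          (-(rayleighNeumann p κ D) * (Real.exp (-κ * t ^ 2 / 2) * sgnPow (p - 1) (φ t))) t) ∧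
      -- (ii) sign and monotonicity properties
      φ 0 = 0 ∧
      (∀ t ∈ Set.Ioc (0 : ℝ) (D / 2), 0 < φ t) ∧
      (∀ t ∈ Set.Ioo (0 : ℝ) (D / 2), 0 < g t) ∧
      g (D / 2) = 0 ∧
      -- (iii) admissibility and attainment of the infimum
      (∃ K : NNReal, LipschitzOnWith K φ (Set.Icc (-(D / 2)) (D / 2))) ∧
      (∫ s in (-(D / 2))..(D / 2), sgnPow (p - 1) (φ s) * Real.exp (-κ * s ^ 2 / 2)) = 0 ∧
      (∫ s in (-(D / 2))..(D / 2), |deriv φ s| ^ p * Real.exp (-κ * s ^ 2 / 2)) /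
        (∫ s in (-(D / 2))..(D / 2), |φ s| ^ p * Real.exp (-κ * s ^ 2 / 2))
        = rayleighNeumann p κ D := by
  exact exists_odd_eigenfunction_rayleighNeumann_general hp (half_pos hD)
    (w := fun s => Real.exp (-κ * s ^ 2 / 2)) (by fun_prop) (fun _ => Real.exp_pos _)
    fun s => by simp only [neg_sq]
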